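/- Let X be a compact Hausdorff space and v : X → M_n(ℂ) a continuous map such that each v(x) is a unitary with v(x)^k = 1. Then the following are equivalent: (i) there exist finitely many continuous maps a₀,…,a_N : X → M_n(ℂ) with each a_i(x) normal, v(x) a_i(x) v(x)* = ζ a_i(x), σ(a_i(x)) ⊆ ✲_k, and Σ_i a_i(x) a_i(x)* = 1 for every x ∈ X (i.e., dim(C(X, M_n(ℂ)), ℤ/k) < ∞ for the pointwise conjugation action); (ii) for every x ∈ X the eigenspaces ker(v(x) − ζ^j), j ∈ {0,…,k−1}, all have the same dimension (necessarily n/k). -/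

import Mathlib

/-- `ζ = exp(2πi/k)`. -/
noncomputable def ltZeta (k : ℕ) : ℂ := Complex.exp (2 * Real.pi * Complex.I / k)

/-- The "asterisk" set `✲_k = {t·ζ^m : t ∈ [0,1], 0 ≤ m < k} ⊆ ℂ`. -/
noncomputable def ltAsterisk (k : ℕ) : Set ℂ :=
  {z | ∃ t ∈ Set.Icc (0 : ℝ) 1, ∃ m : ℕ, m < k ∧ z = (t : ℂ) * ltZeta k ^ m}

/-!
If `v * a * star v = ζ • a` with `a` normal, then traciality gives
`tr (v ^ m * (a * star a)) = ζ ^ m * tr (v ^ m * (a * star a))`. Summing over an admissible family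
yields `tr (v ^ m) = 0` for `0 < m < k`, and the dimensions of the eigenspaces of `v` are the
Fourier coefficients of `m ↦ tr (v ^ m)`, so they agree.

Conversely, if the eigenspaces of `v` have equal dimension, cyclically permuting orthonormal bases
of them defines a unitary `u` with `u ^ k = 1` and `v * u = ζ • (u * v)`. For `v` close to a fixed
`w`, the average of `v ^ m * star w ^ m` is an invertible intertwiner, and its polar part conjugates
such a `u` for `w` into one for `v` that depends continuously on `v`. These local solutions are
glued with square roots of a partition of unity, once and for all over the compact space of
balanced unitaries of order `k`; the resulting family is pulled back along `v : X → M_n(ℂ)`.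
-/

open Finset Module

section CyclicAverage

variable {𝕜 M : Type*} [Field 𝕜] [AddCommGroup M] [Module 𝕜 M] {k : ℕ} {T : End 𝕜 M}

/-- The average of the first `k` powers of an endomorphism `T`. When `T ^ k = 1` it is the
projection onto the vectors fixed by `T`. -/
noncomputable def cyclicAverage (k : ℕ) (T : End 𝕜 M) : End 𝕜 M :=
  (k : 𝕜)⁻¹ • ∑ m ∈ range k, T ^ m

lemma apply_cyclicAverage (hT : T ^ k = 1) (x : M) :
    T (cyclicAverage k T x) = cyclicAverage k T x := by
  have h : (T - 1) * cyclicAverage k T = 0 := by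
    rw [cyclicAverage, mul_smul_comm, mul_geom_sum, hT, sub_self, smul_zero]
  exact sub_eq_zero.1 (LinearMap.congr_fun h x)

lemma cyclicAverage_apply_of_fixed (hk : (k : 𝕜) ≠ 0) {x : M} (hx : T x = x) :
    cyclicAverage k T x = x := by
  have hpow (m : ℕ) : (T ^ m) x = x := by
    rw [Module.End.pow_apply, Function.iterate_fixed hx]
  simp [cyclicAverage, hpow, ← Nat.cast_smul_eq_nsmul 𝕜, smul_smul, hk]

variable {z : 𝕜}

lemma inv_smul_pow_eq_one (hT : T ^ k = 1) (hz : z ^ k = 1) : (z⁻¹ • T) ^ k = 1 := by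
  rw [smul_pow, inv_pow, hz, hT, inv_one, one_smul]

lemma isProj_cyclicAverage_inv_smul (hk : (k : 𝕜) ≠ 0) (hT : T ^ k = 1) (hz : z ^ k = 1) :
    LinearMap.IsProj (End.eigenspace T z) (cyclicAverage k (z⁻¹ • T)) := by
  have hk0 : k ≠ 0 := fun h => hk (by rw [h, Nat.cast_zero])
  have hz0 : z ≠ 0 := (IsUnit.of_pow_eq_one hz hk0).ne_zero
  have hfix (x : M) : x ∈ End.eigenspace T z ↔ (z⁻¹ • T) x = x := by
    rw [End.mem_eigenspace_iff, LinearMap.smul_apply, inv_smul_eq_iff₀ hz0]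
  exact ⟨fun x => (hfix _).2 (apply_cyclicAverage (inv_smul_pow_eq_one hT hz) x),
    fun x hx => cyclicAverage_apply_of_fixed hk ((hfix x).1 hx)⟩

lemma finrank_eigenspace_eq_sum_trace [FiniteDimensional 𝕜 M] (hk : (k : 𝕜) ≠ 0)
    (hT : T ^ k = 1) (hz : z ^ k = 1) :
    (finrank 𝕜 (End.eigenspace T z) : 𝕜) =
      (k : 𝕜)⁻¹ * ∑ m ∈ range k, z⁻¹ ^ m * LinearMap.trace 𝕜 M (T ^ m) := by
  rw [← (isProj_cyclicAverage_inv_smul hk hT hz).trace]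
  simp [cyclicAverage, smul_pow]

lemma sum_cyclicAverage_inv_pow_smul {ζ : 𝕜} (hζ : IsPrimitiveRoot ζ k) (hk : (k : 𝕜) ≠ 0)
    (T : End 𝕜 M) : ∑ j ∈ range k, cyclicAverage k ((ζ ^ j)⁻¹ • T) = 1 := by
  have hk0 : 0 < k := Nat.pos_of_ne_zero fun h => hk (by rw [h, Nat.cast_zero])
  have hgeom (m : ℕ) (hm : m ∈ range k) (hm0 : m ≠ 0) :
      ∑ j ∈ range k, ((ζ ^ j)⁻¹) ^ m = 0 := by
    have hne : (ζ ^ m)⁻¹ ≠ 1 :=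
      inv_ne_one.2 (hζ.pow_ne_one_of_pos_of_lt hm0 (mem_range.1 hm))
    have hpow : ((ζ ^ m)⁻¹) ^ k = 1 := by rw [inv_pow, pow_right_comm, hζ.pow_eq_one]; simp
    calc ∑ j ∈ range k, ((ζ ^ j)⁻¹) ^ m = ∑ j ∈ range k, ((ζ ^ m)⁻¹) ^ j :=
          sum_congr rfl fun j _ => by rw [inv_pow, inv_pow, pow_right_comm]
      _ = 0 := by rw [geom_sum_eq hne, hpow, sub_self, zero_div]
  calc ∑ j ∈ range k, cyclicAverage k ((ζ ^ j)⁻¹ • T)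
      = (k : 𝕜)⁻¹ • ∑ m ∈ range k, (∑ j ∈ range k, ((ζ ^ j)⁻¹) ^ m) • T ^ m := by
        simp only [cyclicAverage, smul_pow, sum_smul]
        rw [← smul_sum, sum_comm]
    _ = (k : 𝕜)⁻¹ • (k : 𝕜) • 1 := by
        rw [sum_eq_single_of_mem 0 (mem_range.2 hk0) fun m hm hm0 => by
          rw [hgeom m hm hm0, zero_smul]]
        simp
    _ = 1 := inv_smul_smul₀ hk 1

lemma iSup_eigenspace_pow_eq_top {ζ : 𝕜} (hζ : IsPrimitiveRoot ζ k) (hk : (k : 𝕜) ≠ 0)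
    (hT : T ^ k = 1) : ⨆ j : Fin k, End.eigenspace T (ζ ^ (j : ℕ)) = ⊤ := by
  refine eq_top_iff.2 fun x _ => ?_
  have hx : ∑ j ∈ range k, cyclicAverage k ((ζ ^ j)⁻¹ • T) x = x := by
    rw [← LinearMap.sum_apply, sum_cyclicAverage_inv_pow_smul hζ hk, End.one_apply]
  rw [← hx]
  refine Submodule.sum_mem _ fun j hj => ?_
  have hj1 : (ζ ^ j) ^ k = 1 := by rw [pow_right_comm, hζ.pow_eq_one, one_pow]
  exact Submodule.mem_iSup_of_mem (p := fun j : Fin k => End.eigenspace T (ζ ^ (j : ℕ)))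
    ⟨j, mem_range.1 hj⟩ ((isProj_cyclicAverage_inv_smul hk hT hj1).map_mem x)

end CyclicAverage

section Balanced

variable {𝕜 M : Type*} [Field 𝕜] [AddCommGroup M] [Module 𝕜 M] {k : ℕ} {ζ : 𝕜} {T : End 𝕜 M}

/-- The eigenspaces of `T` at the powers `1, ζ, …, ζ ^ (k - 1)` all have the same dimension. For
`T ^ k = 1` this means that `T` generates a multiple of the regular representation of `ℤ/k`. -/
def IsBalanced (ζ : 𝕜) (k : ℕ) (T : End 𝕜 M) : Prop :=
  ∀ j j' : Fin k, finrank 𝕜 (End.eigenspace T (ζ ^ (j : ℕ))) =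
    finrank 𝕜 (End.eigenspace T (ζ ^ (j' : ℕ)))

lemma isBalanced_iff_sum_trace [CharZero 𝕜] [FiniteDimensional 𝕜 M] (hζ : ζ ^ k = 1)
    (hT : T ^ k = 1) : IsBalanced ζ k T ↔ ∀ j j' : Fin k,
      ∑ m ∈ range k, (ζ ^ (j : ℕ))⁻¹ ^ m * LinearMap.trace 𝕜 M (T ^ m) =
        ∑ m ∈ range k, (ζ ^ (j' : ℕ))⁻¹ ^ m * LinearMap.trace 𝕜 M (T ^ m) := by
  refine forall₂_congr fun j j' => ?_
  have hk : (k : 𝕜) ≠ 0 := Nat.cast_ne_zero.2 j.pos.ne'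
  have hroot (i : ℕ) : (ζ ^ i) ^ k = 1 := by rw [pow_right_comm, hζ, one_pow]
  rw [← Nat.cast_inj (R := 𝕜), finrank_eigenspace_eq_sum_trace hk hT (hroot j),
    finrank_eigenspace_eq_sum_trace hk hT (hroot j'), mul_right_inj' (inv_ne_zero hk)]

lemma IsBalanced.of_trace_pow_eq_zero [CharZero 𝕜] [FiniteDimensional 𝕜 M]
    (hζ : ζ ^ k = 1) (hT : T ^ k = 1)
    (htr : ∀ m ∈ range k, m ≠ 0 → LinearMap.trace 𝕜 M (T ^ m) = 0) : IsBalanced ζ k T := by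
  refine (isBalanced_iff_sum_trace hζ hT).2 fun j j' => sum_congr rfl fun m hm => ?_
  rcases eq_or_ne m 0 with rfl | hm0
  · simp only [pow_zero]
  · rw [htr m hm hm0, mul_zero, mul_zero]

lemma IsBalanced.conj {N : Type*} [AddCommGroup N] [Module 𝕜 N] (e : M ≃ₗ[𝕜] N)
    (hT : IsBalanced ζ k T) : IsBalanced ζ k (e.conj T) := by
  have heig (z : 𝕜) : End.eigenspace (e.conj T) z =
      (End.eigenspace T z).map (e : M →ₗ[𝕜] N) := by
    ext x
    rw [Submodule.mem_map_equiv, End.mem_eigenspace_iff, End.mem_eigenspace_iff,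
      LinearEquiv.conj_apply_apply, ← map_smul, ← e.eq_symm_apply]
  intro j j'
  rw [heig, heig, LinearEquiv.finrank_map_eq, LinearEquiv.finrank_map_eq, hT j j']

lemma trace_pow_eq_zero_of_twisted {A κ : Type*} [Ring A] [Algebra 𝕜 A] (τ : A →ₗ[𝕜] 𝕜)
    (hτ : ∀ a b, τ (a * b) = τ (b * a)) {v : A} {c : 𝕜} [Fintype κ] {a b : κ → A}
    (hva : ∀ i, SemiconjBy (a i) (c • v) v) (hab : ∀ i, Commute (a i) (b i))
    (hsum : ∑ i, a i * b i = 1) {m : ℕ} (hm : c ^ m ≠ 1) : τ (v ^ m) = 0 := by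
  have hpow (i : κ) : v ^ m * a i = c ^ m • (a i * v ^ m) := by
    rw [← ((hva i).pow_right m).eq, smul_pow, mul_smul_comm]
  have hterm (i : κ) : τ (v ^ m * (a i * b i)) = c ^ m * τ (v ^ m * (a i * b i)) :=
    calc τ (v ^ m * (a i * b i)) = c ^ m * τ (a i * (v ^ m * b i)) := by
          rw [← mul_assoc, hpow, smul_mul_assoc, map_smul, smul_eq_mul, mul_assoc]
      _ = c ^ m * τ (v ^ m * (a i * b i)) := by rw [hτ, mul_assoc, (hab i).eq]
  have hfix : τ (v ^ m) = c ^ m * τ (v ^ m) :=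
    calc τ (v ^ m) = ∑ i, τ (v ^ m * (a i * b i)) := by
          rw [← map_sum, ← mul_sum, hsum, mul_one]
      _ = ∑ i, c ^ m * τ (v ^ m * (a i * b i)) := sum_congr rfl fun i _ => hterm i
      _ = c ^ m * τ (v ^ m) := by rw [← mul_sum, ← map_sum, ← mul_sum, hsum, mul_one]
  by_contra h
  exact hm (mul_right_cancel₀ h (hfix.symm.trans (one_mul _).symm))

end Balanced

section Shift

variable {A B : Type*} [Ring A] [StarRing A] [Algebra ℂ A] [Ring B] [StarRing B] [Algebra ℂ B]

/-- `u` is a shift for the clock `v`: a unitary with `u ^ k = 1` and `v * u = ζ • (u * v)`, as in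
the Weyl commutation relation for clock and shift matrices. -/
structure IsShift (ζ : ℂ) (k : ℕ) (v u : A) : Prop where
  mem_unitary : u ∈ unitary A
  pow_eq_one : u ^ k = 1
  semiconjBy : SemiconjBy u (ζ • v) v

lemma IsShift.map {ζ : ℂ} {k : ℕ} {v u : A} (h : IsShift ζ k v u) (φ : A →⋆ₐ[ℂ] B) :
    IsShift ζ k (φ v) (φ u) where
  mem_unitary := Unitary.map_mem φ h.mem_unitary
  pow_eq_one := by rw [← map_pow, h.pow_eq_one, map_one]
  semiconjBy := by simpa only [map_smul] using h.semiconjBy.map φ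

end Shift

section Hilbert

variable {E : Type*} [NormedAddCommGroup E] [InnerProductSpace ℂ E] {k : ℕ} {ζ : ℂ}

lemma inner_eq_zero_of_mem_eigenspace [CompleteSpace E] {v : E →L[ℂ] E}
    (hv : v ∈ unitary (E →L[ℂ] E)) {z w : ℂ} (hz : ‖z‖ = 1) (hzw : z ≠ w) {x y : E}
    (hx : x ∈ End.eigenspace (v : End ℂ E) z) (hy : y ∈ End.eigenspace (v : End ℂ E) w) :
    inner ℂ x y = 0 := by
  have hvx : v x = z • x := End.mem_eigenspace_iff.1 hx
  have hvy : v y = w • y := End.mem_eigenspace_iff.1 hy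
  have h : inner ℂ x y = w * (star z * inner ℂ x y) := by
    conv_lhs => rw [← ContinuousLinearMap.inner_map_map_of_mem_unitary hv, hvx, hvy]
    rw [inner_smul_left, inner_smul_right]
    simp only [starRingEnd_apply]
    ring
  have hzz : z * star z = 1 := by simpa [hz] using Complex.mul_conj' z
  have hsub : (z - w) * inner ℂ x y = 0 := by
    linear_combination z * h + inner ℂ x y * w * hzz
  exact (mul_eq_zero.1 hsub).resolve_left (sub_ne_zero.2 hzw)

variable [FiniteDimensional ℂ E]

lemma exists_orthonormalBasis_eigenvectors {v : E →L[ℂ] E} (hv : v ∈ unitary (E →L[ℂ] E))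
    (hvk : v ^ k = 1) (hk : k ≠ 0) (hζ : IsPrimitiveRoot ζ k)
    (hbal : IsBalanced ζ k (v : End ℂ E)) :
    ∃ (d : ℕ) (b : OrthonormalBasis (Fin k × Fin d) ℂ E),
      ∀ j l, v (b (j, l)) = ζ ^ (j : ℕ) • b (j, l) := by
  let V (j : Fin k) : Submodule ℂ E := End.eigenspace (v : End ℂ E) (ζ ^ (j : ℕ))
  have hVk : (v : End ℂ E) ^ k = 1 := by
    rw [← ContinuousLinearMap.toLinearMap_pow, hvk]; rfl
  have hV : OrthogonalFamily ℂ (fun j => V j) fun j => (V j).subtypeₗᵢ := by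
    refine OrthogonalFamily.of_pairwise fun j j' hj => ?_
    refine Submodule.isOrtho_iff_inner_eq.2 fun x hx y hy =>
      inner_eq_zero_of_mem_eigenspace hv ?_ (fun h => hj (Fin.ext (hζ.pow_inj j.2 j'.2 h))) hx hy
    rw [norm_pow, hζ.norm'_eq_one hk, one_pow]
  have hint : DirectSum.IsInternal V := by
    rw [hV.isInternal_iff, iSup_eigenspace_pow_eq_top hζ (Nat.cast_ne_zero.2 hk) hVk,
      Submodule.top_orthogonal_eq_bot]
  let d := finrank ℂ (V ⟨0, Nat.pos_of_ne_zero hk⟩)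
  let e (j : Fin k) : OrthonormalBasis (Fin d) ℂ (V j) :=
    (stdOrthonormalBasis ℂ (V j)).reindex (finCongr (hbal _ _))
  refine ⟨d, (hint.collectedOrthonormalBasis hV e).reindex (Equiv.sigmaEquivProd _ _),
    fun j l => ?_⟩
  rw [OrthonormalBasis.reindex_apply]
  exact End.mem_eigenspace_iff.1 (hint.collectedOrthonormalBasis_mem hV e ⟨j, l⟩)

lemma exists_isShift_of_isBalanced {v : E →L[ℂ] E} (hv : v ∈ unitary (E →L[ℂ] E))
    (hvk : v ^ k = 1) (hk : k ≠ 0) (hζ : IsPrimitiveRoot ζ k)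
    (hbal : IsBalanced ζ k (v : End ℂ E)) : ∃ u, IsShift ζ k v u := by
  obtain ⟨d, b, hb⟩ := exists_orthonormalBasis_eigenvectors hv hvk hk hζ hbal
  have : NeZero k := ⟨hk⟩
  let σ : Fin k × Fin d ≃ Fin k × Fin d := Equiv.prodCongr (Equiv.addRight 1) (Equiv.refl _)
  let u : unitary (E →L[ℂ] E) := Unitary.linearIsometryEquiv.symm (b.equiv b σ)
  have hu (p : Fin k × Fin d) : (u : E →L[ℂ] E) (b p) = b (p.1 + 1, p.2) :=
    b.equiv_apply_basis b σ p
  have hupow (m : ℕ) (p : Fin k × Fin d) :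
      ((u : E →L[ℂ] E) ^ m) (b p) = b (p.1 + m • 1, p.2) := by
    induction m with
    | zero => simp
    | succ m ih => rw [pow_succ', mul_apply_eq_comp, ih, hu, succ_nsmul, add_assoc]
  have hext {f g : E →L[ℂ] E} (h : ∀ p, f (b p) = g (b p)) : f = g :=
    ContinuousLinearMap.coe_injective (b.toBasis.ext fun p => by simpa using h p)
  have hζpow (j : Fin k) : ζ ^ ((j + 1 : Fin k) : ℕ) = ζ * ζ ^ (j : ℕ) := by
    rw [Fin.val_add, ← pow_eq_pow_mod _ hζ.pow_eq_one, pow_add, Fin.coe_ofNat_eq_mod,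
      ← pow_eq_pow_mod _ hζ.pow_eq_one, pow_one, mul_comm]
  refine ⟨u, u.2, hext fun p => ?_, hext fun p => ?_⟩
  · have hcard : k • (1 : Fin k) = 0 := by simpa using card_nsmul_eq_zero' (x := (1 : Fin k))
    simp [hupow, hcard]
  · simp [hu, hb, hζpow, smul_smul]

end Hilbert

section PolarPart

variable {A : Type*} [CStarAlgebra A] [PartialOrder A] [StarOrderedRing A]

/-- The polar part `z |z|⁻¹` of an element `z` of a C⋆-algebra, which is a unitary when `z` is
invertible. -/
noncomputable def polarPart (z : A) : A :=
  z * Ring.inverse (CFC.abs z)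

lemma isUnit_abs {z : A} (hz : IsUnit z) : IsUnit (CFC.abs z) := by
  rw [← isUnit_pow_iff two_ne_zero, CFC.abs_sq]
  exact hz.star.mul hz

lemma polarPart_mem_unitary {z : A} (hz : IsUnit z) : polarPart z ∈ unitary A := by
  have habs := isUnit_abs hz
  refine (hz.mul habs.ringInverse).mem_unitary_of_star_mul_self ?_
  calc star (z * Ring.inverse (CFC.abs z)) * (z * Ring.inverse (CFC.abs z))
      = Ring.inverse (CFC.abs z) * (star z * z) * Ring.inverse (CFC.abs z) := by
        rw [star_mul, (CFC.abs_nonneg z).isSelfAdjoint.ringInverse.star_eq]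
        simp only [mul_assoc]
    _ = 1 := by
        rw [← CFC.abs_mul_abs, Ring.inverse_mul_cancel_left _ _ habs,
          Ring.mul_inverse_cancel _ habs]

lemma continuousOn_polarPart : ContinuousOn (polarPart : A → A) {z | IsUnit z} := by
  refine continuousOn_id.mul fun z hz => ContinuousAt.continuousWithinAt ?_
  obtain ⟨r, hr⟩ := isUnit_abs hz
  have hinv : ContinuousAt Ring.inverse (CFC.abs z) := hr ▸ NormedRing.inverse_continuousAt r
  exact hinv.comp CFC.continuous_abs.continuousAt

lemma semiconjBy_polarPart {z v w : A} (hz : IsUnit z) (hv : v ∈ unitary A)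
    (hw : w ∈ unitary A) (h : SemiconjBy z w v) : SemiconjBy (polarPart z) w v := by
  have hstar : SemiconjBy (star z) v w :=
    calc star z * v = w * star (z * w) * v := by
          rw [star_mul, ← mul_assoc, Unitary.mul_star_self_of_mem hw, one_mul]
      _ = w * star z := by
          rw [h.eq, star_mul, mul_assoc, mul_assoc, Unitary.star_mul_self_of_mem hv, mul_one]
  have hcomm : Commute (CFC.abs z) w := Commute.cfcₙ_nnreal (hstar.mul_left h) _
  obtain ⟨r, hr⟩ := isUnit_abs hz
  rw [← hr] at hcomm
  rw [polarPart, ← hr, Ring.inverse_unit]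
  exact h.mul_left hcomm.units_inv_left

end PolarPart

section Intertwiner

lemma mulLeft_mul_mulRight_pow {A : Type*} [Ring A] [Algebra ℂ A] (a b : A) (m : ℕ) :
    (LinearMap.mulLeft ℂ a * LinearMap.mulRight ℂ b) ^ m =
      LinearMap.mulLeft ℂ (a ^ m) * LinearMap.mulRight ℂ (b ^ m) := by
  rw [(LinearMap.commute_mulLeft_right a b).mul_pow, LinearMap.pow_mulLeft,
    LinearMap.pow_mulRight]

variable {A : Type*} [Ring A] [StarRing A] [Algebra ℂ A] {k : ℕ} {v w : A}

/-- The average `k⁻¹ ∑ v ^ m * star w ^ m` over `m < k`, which intertwines two unitaries `v` and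
`w` of order `k` and equals `1` when they coincide. -/
noncomputable def intertwiner (k : ℕ) (v w : A) : A :=
  cyclicAverage k (LinearMap.mulLeft ℂ v * LinearMap.mulRight ℂ (star w)) 1

lemma semiconjBy_intertwiner (hw : w ∈ unitary A) (hvk : v ^ k = 1) (hwk : w ^ k = 1) :
    SemiconjBy (intertwiner k v w) w v := by
  have hT : (LinearMap.mulLeft ℂ v * LinearMap.mulRight ℂ (star w)) ^ k = 1 := by
    ext x
    simp [mulLeft_mul_mulRight_pow, hvk, ← star_pow, hwk]
  have hfix : v * (intertwiner k v w * star w) = intertwiner k v w := apply_cyclicAverage hT 1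
  calc intertwiner k v w * w = v * (intertwiner k v w * star w) * w := by rw [hfix]
    _ = v * intertwiner k v w := by
      rw [mul_assoc, mul_assoc, Unitary.star_mul_self_of_mem hw, mul_one]

lemma intertwiner_self (hk : k ≠ 0) (hw : w ∈ unitary A) : intertwiner k w w = 1 :=
  cyclicAverage_apply_of_fixed (Nat.cast_ne_zero.2 hk) (by
    simp [Unitary.mul_star_self_of_mem hw])

lemma continuous_intertwiner [TopologicalSpace A] [IsTopologicalRing A] [ContinuousConstSMul ℂ A]
    (k : ℕ) (w : A) : Continuous fun v => intertwiner k v w := by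
  have hsum (v : A) : intertwiner k v w = (k : ℂ)⁻¹ • ∑ m ∈ range k, v ^ m * star w ^ m := by
    simp [intertwiner, cyclicAverage, mulLeft_mul_mulRight_pow]
  simp only [hsum]
  fun_prop

end Intertwiner

section LocalShift

variable {A : Type*} [CStarAlgebra A] [PartialOrder A] [StarOrderedRing A] {k : ℕ} {ζ : ℂ}

lemma IsShift.conj {v w u W : A} (hW : W ∈ unitary A) (hvw : SemiconjBy W w v)
    (h : IsShift ζ k w u) : IsShift ζ k v (W * u * star W) := by
  have hv : v = W * w * star W := by
    rw [hvw.eq, mul_assoc, Unitary.mul_star_self_of_mem hW, mul_one]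
  rw [hv]
  exact h.map (Unitary.conjStarAlgAut ℂ A ⟨W, hW⟩ : A →⋆ₐ[ℂ] A)

lemma exists_continuousOn_isShift (hk : k ≠ 0) {w u : A} (hw : w ∈ unitary A) (hwk : w ^ k = 1)
    (h : IsShift ζ k w u) : ∃ (U : Set A) (s : A → A), IsOpen U ∧ w ∈ U ∧ ContinuousOn s U ∧
      ∀ v ∈ U, v ∈ unitary A → v ^ k = 1 → IsShift ζ k v (s v) := by
  have hZ : Continuous fun v => intertwiner k v w := continuous_intertwiner k w
  let U : Set A := {v | IsUnit (intertwiner k v w)}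
  let W (v : A) : A := polarPart (intertwiner k v w)
  have hW : ContinuousOn W U := continuousOn_polarPart.comp hZ.continuousOn fun _ hv => hv
  refine ⟨U, fun v => W v * u * star (W v), Units.isOpen.preimage hZ, ?_, by fun_prop,
    fun v hvU hv hvk => ?_⟩
  · rw [Set.mem_ofPred_eq, intertwiner_self hk hw]
    exact isUnit_one
  · exact h.conj (polarPart_mem_unitary hvU)
      (semiconjBy_polarPart hvU hv hw (semiconjBy_intertwiner hw hvk hwk))

end LocalShift

section Admissible

variable {A : Type*} {k : ℕ}

lemma isPrimitiveRoot_ltZeta (hk : k ≠ 0) : IsPrimitiveRoot (ltZeta k) k :=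
  Complex.isPrimitiveRoot_exp k hk

/-- The pointwise conditions on the elements of an admissible family for conjugation by `v`:
`a` is normal, `v * a * star v = ζ • a`, and the spectrum of `a` lies in the asterisk. -/
structure IsAdmissible [Ring A] [StarRing A] [Algebra ℂ A] (k : ℕ) (v a : A) : Prop where
  isStarNormal : IsStarNormal a
  conj_eq : v * a * star v = ltZeta k • a
  spectrum_subset : spectrum ℂ a ⊆ ltAsterisk k

lemma ofReal_mul_mem_ltAsterisk {t : ℝ} (ht : t ∈ Set.Icc (0 : ℝ) 1) (hk : k ≠ 0) {z : ℂ}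
    (hz : z ^ k = 1) : t * z ∈ ltAsterisk k := by
  have : NeZero k := ⟨hk⟩
  obtain ⟨m, hm, rfl⟩ := (isPrimitiveRoot_ltZeta hk).eq_pow_of_pow_eq_one hz
  exact ⟨t, ht, m, hm, rfl⟩

lemma spectrum_pow_eq_one [Ring A] [Algebra ℂ A] {u : A} (hu : u ^ k = 1) {z : ℂ}
    (hz : z ∈ spectrum ℂ u) : z ^ k = 1 := by
  have hmem : z ^ k ∈ spectrum ℂ (u ^ k) := spectrum.pow_mem_pow u k hz
  have : Nontrivial A := not_subsingleton_iff_nontrivial.1 fun _ => by simp at hmem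
  simpa [hu] using hmem

lemma isAdmissible_zero [Ring A] [StarRing A] [Algebra ℂ A] (hk : k ≠ 0) (v : A) :
    IsAdmissible k v 0 where
  isStarNormal := .zero
  conj_eq := by simp
  spectrum_subset := by
    nontriviality A
    rw [spectrum.zero_eq, Set.singleton_subset_iff]
    simpa using ofReal_mul_mem_ltAsterisk (t := 0) (by simp) hk (one_pow k)

lemma IsShift.isAdmissible_smul [CStarAlgebra A] (hk : k ≠ 0) {v u : A} (hv : v ∈ unitary A)
    (h : IsShift (ltZeta k) k v u) {t : ℝ} (ht : t ∈ Set.Icc (0 : ℝ) 1) :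
    IsAdmissible k v (t • u) where
  isStarNormal :=
    have : IsStarNormal u := isStarNormal_of_mem_unitary h.mem_unitary
    inferInstance
  conj_eq := by
    have huv : v * u = ltZeta k • (u * v) := by rw [← h.semiconjBy.eq, mul_smul_comm]
    rw [mul_smul_comm, smul_mul_assoc, huv, smul_mul_assoc, mul_assoc,
      Unitary.mul_star_self_of_mem hv, mul_one, smul_comm]
  spectrum_subset := by
    rcases eq_or_ne t 0 with rfl | ht0
    · simpa using (isAdmissible_zero hk v).spectrum_subset
    · have hsmul := spectrum.unit_smul_eq_smul u (Units.mk0 (t : ℂ) (mod_cast ht0))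
      rw [Units.smul_mk0, Complex.coe_smul] at hsmul
      rw [hsmul]
      rintro _ ⟨z, hz, rfl⟩
      exact ofReal_mul_mem_ltAsterisk ht hk (spectrum_pow_eq_one h.pow_eq_one hz)

end Admissible

section Gluing

variable {A : Type*} [CStarAlgebra A] {k : ℕ}

lemma exists_isAdmissible_of_tsupport_subset {X : Type*} [TopologicalSpace X] (hk : k ≠ 0)
    {v u : X → A} (hv : ∀ x, v x ∈ unitary A) {U : Set X} (hU : IsOpen U)
    (hu : ContinuousOn u U)
    (hshift : ∀ x ∈ U, IsShift (ltZeta k) k (v x) (u x)) (f : C(X, ℝ))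
    (hf : ∀ x, f x ∈ Set.Icc (0 : ℝ) 1) (hfU : tsupport f ⊆ U) :
    ∃ a : X → A, Continuous a ∧ (∀ x, IsAdmissible k (v x) (a x)) ∧
      ∀ x, a x * star (a x) = f x • 1 := by
  have hzero (x : X) (hx : x ∉ U) : f x = 0 :=
    image_eq_zero_of_notMem_tsupport fun h => hx (hfU h)
  refine ⟨fun x => √(f x) • u x, ?_, fun x => ?_, fun x => ?_⟩
  · refine continuous_of_tsupport fun x hx => ?_
    have hxU : x ∈ U := hfU <| tsupport_comp_subset Real.sqrt_zero f <|
      tsupport_smul_subset_left (fun x => √(f x)) u hx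
    exact (f.continuous.sqrt.continuousAt).smul (hu.continuousAt (hU.mem_nhds hxU))
  · by_cases hx : x ∈ U
    · exact (hshift x hx).isAdmissible_smul hk (hv x)
        ⟨Real.sqrt_nonneg _, Real.sqrt_le_one.2 (hf x).2⟩
    · simpa [hzero x hx] using isAdmissible_zero hk (v x)
  · by_cases hx : x ∈ U
    · simp [smul_smul, Real.mul_self_sqrt (hf x).1,
        Unitary.mul_star_self_of_mem (hshift x hx).mem_unitary]
    · simp [hzero x hx]

variable [PartialOrder A] [StarOrderedRing A]

theorem exists_admissible_family {X : Type*} [TopologicalSpace X] [CompactSpace X] [T2Space X]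
    (hk : k ≠ 0) {v : X → A} (hvcont : Continuous v) (hvu : ∀ x, v x ∈ unitary A)
    (hvk : ∀ x, v x ^ k = 1) (hshift : ∀ x, ∃ u, IsShift (ltZeta k) k (v x) u) :
    ∃ (N : ℕ) (a : Fin (N + 1) → X → A), (∀ i, Continuous (a i)) ∧
      (∀ i x, IsAdmissible k (v x) (a i x)) ∧ ∀ x, ∑ i, a i x * star (a i x) = 1 := by
  choose u₀ hu₀ using hshift
  choose U s hUo hxU hs hUs using
    fun x => exists_continuousOn_isShift hk (hvu x) (hvk x) (hu₀ x)
  obtain ⟨t, ht⟩ := CompactSpace.elim_nhds_subcover (fun x => v ⁻¹' U x)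
    fun x => ((hUo x).preimage hvcont).mem_nhds (hxU x)
  let p (i : Fin t.card) : X := t.equivFin.symm i
  have hcover : Set.univ ⊆ ⋃ i, v ⁻¹' U (p i) := by
    refine ht.symm.subset.trans (Set.iUnion₂_subset fun x hx => ?_)
    exact Set.subset_iUnion_of_subset (t.equivFin ⟨x, hx⟩) (by simp [p])
  obtain ⟨f, hfU, hf1, hf, -⟩ := exists_continuous_sum_one_of_isOpen_isCompact
    (fun i => (hUo (p i)).preimage hvcont) isCompact_univ hcover
  choose a hacont hadm haa using fun i => exists_isAdmissible_of_tsupport_subset hk hvu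
    ((hUo (p i)).preimage hvcont) ((hs (p i)).comp hvcont.continuousOn fun _ hx => hx)
    (fun x hx => hUs (p i) (v x) hx (hvu x) (hvk x)) (f i) (hf i) (hfU i)
  refine ⟨t.card, Fin.cons 0 a, Fin.cases continuous_zero hacont,
    Fin.cases (fun x => isAdmissible_zero hk (v x)) hadm, fun x => ?_⟩
  have hsum : ∑ i, f i x = 1 := by simpa using hf1 (Set.mem_univ x)
  simp only [Fin.sum_univ_succ, Fin.cons_zero, Fin.cons_succ, Pi.zero_apply, zero_mul, zero_add,
    haa, ← sum_smul, hsum, one_smul]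

end Gluing

section Matrix

open scoped Matrix.Norms.L2Operator MatrixOrder

variable {ι : Type*} [Fintype ι] [DecidableEq ι] {k : ℕ}

lemma isCompact_unitary (A : Type*) [NormedRing A] [StarRing A] [CStarRing A] [ProperSpace A] :
    IsCompact (unitary A : Set A) := by
  nontriviality A
  refine Metric.isCompact_of_isClosed_isBounded isClosed_unitary ?_
  exact isBounded_iff_forall_norm_le.2 ⟨1, fun u hu => (CStarRing.norm_of_mem_unitary hu).le⟩

lemma toLin'_pow_eq_one {v : Matrix ι ι ℂ} (hv : v ^ k = 1) : v.toLin' ^ k = 1 := by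
  rw [← Matrix.toLin'_pow, hv, Matrix.toLin'_one, End.one_eq_id]

lemma trace_toLin'_pow (v : Matrix ι ι ℂ) (m : ℕ) :
    LinearMap.trace ℂ (ι → ℂ) (v.toLin' ^ m) = (v ^ m).trace := by
  rw [← Matrix.toLin'_pow, Matrix.trace_toLin'_eq]

/-- The balanced unitary matrices `v` with `v ^ k = 1`. This is the universal base space over
which admissible families are constructed. -/
def balancedUnitary (ι : Type*) [Fintype ι] [DecidableEq ι] (k : ℕ) : Set (Matrix ι ι ℂ) :=
  {v | v ∈ unitary (Matrix ι ι ℂ) ∧ v ^ k = 1 ∧ IsBalanced (ltZeta k) k v.toLin'}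

lemma isCompact_balancedUnitary (hk : k ≠ 0) : IsCompact (balancedUnitary ι k) := by
  have hζ := (isPrimitiveRoot_ltZeta hk).pow_eq_one
  let p (v : Matrix ι ι ℂ) (j : Fin k) : ℂ :=
    ∑ m ∈ range k, (ltZeta k ^ (j : ℕ))⁻¹ ^ m * (v ^ m).trace
  have hp (j : Fin k) : Continuous fun v => p v j :=
    continuous_finsetSum _ fun m _ => (continuous_pow m).matrix_trace.const_mul _
  have hset : balancedUnitary ι k =
      (unitary (Matrix ι ι ℂ) : Set (Matrix ι ι ℂ)) ∩
        ({v | v ^ k = 1} ∩ {v | ∀ j j', p v j = p v j'}) := by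
    ext v
    refine and_congr_right fun _ => and_congr_right fun hvk => ?_
    rw [isBalanced_iff_sum_trace hζ (toLin'_pow_eq_one hvk)]
    simp only [trace_toLin'_pow]
    rfl
  rw [hset]
  refine (isCompact_unitary _).inter_right ((isClosed_eq (by fun_prop) continuous_const).inter ?_)
  simp only [Set.ofPred_forall]
  exact isClosed_iInter fun j => isClosed_iInter fun j' => isClosed_eq (hp j) (hp j')

lemma exists_isShift_matrix (hk : k ≠ 0) {v : Matrix ι ι ℂ} (hv : v ∈ balancedUnitary ι k) :
    ∃ u, IsShift (ltZeta k) k v u := by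
  obtain ⟨hvu, hvk, hbal⟩ := hv
  let φ : Matrix ι ι ℂ ≃⋆ₐ[ℂ] (EuclideanSpace ℂ ι →L[ℂ] EuclideanSpace ℂ ι) :=
    Matrix.toEuclideanCLM
  have hbal' : IsBalanced (ltZeta k) k (φ v : End ℂ (EuclideanSpace ℂ ι)) :=
    hbal.conj (WithLp.linearEquiv 2 ℂ (ι → ℂ)).symm
  obtain ⟨u, hu⟩ := exists_isShift_of_isBalanced (Unitary.map_mem φ hvu)
    (by rw [← map_pow, hvk, map_one]) hk (isPrimitiveRoot_ltZeta hk) hbal'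
  refine ⟨φ.symm u, ?_⟩
  simpa using hu.map (φ.symm : _ →⋆ₐ[ℂ] Matrix ι ι ℂ)

lemma isBalanced_of_sum_mul_star_eq_one {κ : Type*} [Fintype κ] (hk : k ≠ 0)
    {v : Matrix ι ι ℂ} (hv : v ∈ unitary (Matrix ι ι ℂ)) (hvk : v ^ k = 1)
    {a : κ → Matrix ι ι ℂ} (ha : ∀ i, IsStarNormal (a i))
    (hva : ∀ i, v * a i * star v = ltZeta k • a i) (hsum : ∑ i, a i * star (a i) = 1) :
    IsBalanced (ltZeta k) k v.toLin' := by
  have hζ := isPrimitiveRoot_ltZeta hk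
  have hsemiconj (i : κ) : SemiconjBy (a i) (ltZeta k • v) v :=
    calc a i * (ltZeta k • v) = v * a i * star v * v := by
          rw [hva, mul_smul_comm, smul_mul_assoc]
      _ = v * a i := by rw [mul_assoc, Unitary.star_mul_self_of_mem hv, mul_one]
  refine .of_trace_pow_eq_zero hζ.pow_eq_one (toLin'_pow_eq_one hvk) fun m hm hm0 => ?_
  rw [trace_toLin'_pow]
  exact trace_pow_eq_zero_of_twisted (Matrix.traceLinearMap ι ℂ ℂ) Matrix.trace_mul_comm hsemiconj
    (fun i => (ha i).star_comm_self.symm) hsum (hζ.pow_ne_one_of_pos_of_lt hm0 (mem_range.1 hm))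

lemma exists_admissible_family_balancedUnitary (hk : k ≠ 0) :
    ∃ (N : ℕ) (a : Fin (N + 1) → balancedUnitary ι k → Matrix ι ι ℂ), (∀ i, Continuous (a i)) ∧
      (∀ i w, IsAdmissible k w.1 (a i w)) ∧ ∀ w, ∑ i, a i w * star (a i w) = 1 :=
  have : CompactSpace (balancedUnitary ι k) :=
    isCompact_iff_compactSpace.1 (isCompact_balancedUnitary hk)
  exists_admissible_family (v := Subtype.val) hk continuous_subtype_val (fun w => w.2.1)
    (fun w => w.2.2.1) fun w => exists_isShift_matrix hk w.2

end Matrix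

theorem stmt5_general {X ι : Type*} [TopologicalSpace X] [Fintype ι] [DecidableEq ι] {k : ℕ}
    (hk : 0 < k) {v : X → Matrix ι ι ℂ} (hvcont : Continuous v)
    (hvu : ∀ x, v x ∈ unitary (Matrix ι ι ℂ)) (hvk : ∀ x, v x ^ k = 1) :
    (∃ N : ℕ, ∃ a : Fin (N + 1) → X → Matrix ι ι ℂ,
        (∀ i, Continuous (a i)) ∧
        (∀ i x, IsStarNormal (a i x)) ∧
        (∀ i x, v x * a i x * star (v x) = ltZeta k • a i x) ∧
        (∀ i x, spectrum ℂ (a i x) ⊆ ltAsterisk k) ∧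
        (∀ x, (∑ i, a i x * star (a i x)) = 1)) ↔
    (∀ x, IsBalanced (ltZeta k) k (v x).toLin') := by
  constructor
  · rintro ⟨N, a, -, hnormal, hconj, -, hsum⟩ x
    exact isBalanced_of_sum_mul_star_eq_one hk.ne' (hvu x) (hvk x) (fun i => hnormal i x)
      (fun i => hconj i x) (hsum x)
  · intro hbal
    obtain ⟨N, a, hacont, hadm, hsum⟩ := exists_admissible_family_balancedUnitary (ι := ι) hk.ne'
    let w (x : X) : balancedUnitary ι k := ⟨v x, hvu x, hvk x, hbal x⟩
    exact ⟨N, fun i x => a i (w x), fun i => (hacont i).comp (hvcont.subtype_mk _),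
      fun i x => (hadm i (w x)).isStarNormal, fun i x => (hadm i (w x)).conj_eq,
      fun i x => (hadm i (w x)).spectrum_subset, fun x => hsum (w x)⟩

/-- For a continuous family of unitaries `v : X → M_n(ℂ)` with
`v(x)^k = 1` over a compact Hausdorff space, the (plain) local-triviality dimension of
the pointwise conjugation `ℤ/k`-action on `C(X, M_n(ℂ))` is finite — i.e. there is a
finite admissible family of continuous maps with pointwise `Σ aᵢ aᵢ* = 1` — if and only
if, at every `x`, all the eigenspaces `ker(v(x) - ζ^j)` have the same dimension. -/
theorem stmt5
    {X : Type*} [TopologicalSpace X] [CompactSpace X] [T2Space X]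
    (n k : ℕ) (hk : 0 < k)
    (v : X → Matrix (Fin n) (Fin n) ℂ) (hvcont : Continuous v)
    (hvu : ∀ x, v x ∈ unitary (Matrix (Fin n) (Fin n) ℂ))
    (hvk : ∀ x, v x ^ k = 1) :
    (∃ N : ℕ, ∃ a : Fin (N + 1) → X → Matrix (Fin n) (Fin n) ℂ,
        (∀ i, Continuous (a i)) ∧
        (∀ i x, IsStarNormal (a i x)) ∧
        (∀ i x, v x * a i x * star (v x) = ltZeta k • a i x) ∧
        (∀ i x, spectrum ℂ (a i x) ⊆ ltAsterisk k) ∧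
        (∀ x, (∑ i, a i x * star (a i x)) = 1)) ↔
    (∀ x, ∀ j j' : Fin k,
        Module.finrank ℂ
          ↥(Module.End.eigenspace (Matrix.toLin' (v x)) (ltZeta k ^ (j : ℕ))) =
        Module.finrank ℂ
          ↥(Module.End.eigenspace (Matrix.toLin' (v x)) (ltZeta k ^ (j' : ℕ)))) :=
  stmt5_general hk hvcont hvu hvk
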